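/- Let n ≥ 3 be an integer and p > 1 with n > 2p/(p−1). Then there exist γ > 0 and l ∈ (0,1], and for these there exist R₀ > 1 and ε₀ ∈ (0,1), such that for every R ≥ R₀ and every ε ∈ (0, ε₀], the function ψ(r,t) = ((r−ε)(R−r))^{−2/(p−1)} · (1+r)^{2/(p−1)} · (1 + (ε/r)^{l} · R^{2/(p−1)}) · exp(γ(t+1)) satisfies ψ_rr + ((n−1)/r) ψ_r − ψ^p − ψ_t ≤ 0 for all r ∈ (ε, R) and all t > 0. -/

import Mathlib

/-- The supersolution `ψ_{R,ε}(r,t)` used in the case `n > 2p/(p-1)`. -/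
noncomputable def psiSup (p γ l R ε r t : ℝ) : ℝ :=
  ((r - ε) * (R - r)) ^ (-2 / (p - 1)) * (1 + r) ^ (2 / (p - 1))
    * (1 + (ε / r) ^ l * R ^ (2 / (p - 1))) * Real.exp (γ * (t + 1))

/-!
Divide the inequality by `ψ > 0`. With `V = ψ_r / ψ`, `α = 2 / (p - 1)` and `N = n - 1` it reads
`V_r + V ^ 2 + (N / r) V ≤ ψ ^ (p - 1) + γ`. Completing squares bounds the left side by
`κ (r - ε)⁻² - m r⁻¹ (r - ε)⁻¹ + B (R - r)⁻² + K`, where `n > 2p / (p - 1) = 2 + α` allows taking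
`κ < m` as soon as `l` is small.

The constant `K` is absorbed by `γ`, the outer singularity by `ψ ^ (p - 1)`, which dominates
`e ^ (γ (p - 1)) (R - r)⁻²`. The two inner terms have a nonpositive sum unless `r` is comparable
to `ε`. There `(ε / r) ^ l` is bounded below, and then the weight `R ^ α` makes `ψ ^ (p - 1)`
dominate a multiple of `e ^ (γ (p - 1)) (r - ε)⁻²`, uniformly in `R`.
-/

open Filter Topology

section LogDeriv

variable {𝕜 : Type*} [NontriviallyNormedField 𝕜] {f g : 𝕜 → 𝕜} {u v x : 𝕜}

/-- `f` has logarithmic derivative `u` at `x`. The relation `f' = f u` is used in place of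
`u = f' / f`, so that products need no nonvanishing hypothesis. -/
def HasLogDerivAt (f : 𝕜 → 𝕜) (u x : 𝕜) : Prop :=
  HasDerivAt f (f x * u) x

namespace HasLogDerivAt

theorem of_hasDerivAt {f' : 𝕜} (hf : HasDerivAt f f' x) (hx : f x ≠ 0) :
    HasLogDerivAt f (f' / f x) x :=
  hf.congr_deriv (mul_div_cancel₀ f' hx).symm

protected theorem deriv (hf : HasLogDerivAt f u x) : deriv f x = f x * u :=
  HasDerivAt.deriv hf

theorem mul (hf : HasLogDerivAt f u x) (hg : HasLogDerivAt g v x) :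
    HasLogDerivAt (fun y => f y * g y) (u + v) x :=
  (HasDerivAt.fun_mul hf hg).congr_deriv (by ring)

theorem mul_const (hf : HasLogDerivAt f u x) (c : 𝕜) :
    HasLogDerivAt (fun y => f y * c) u x :=
  (HasDerivAt.mul_const hf c).congr_deriv (by ring)

theorem div (hf : HasLogDerivAt f u x) (hg : HasLogDerivAt g v x) (hx : g x ≠ 0) :
    HasLogDerivAt (fun y => f y / g y) (u - v) x :=
  (HasDerivAt.fun_div hf hg hx).congr_deriv (by field_simp)

theorem const_add (hf : HasLogDerivAt f u x) (c : 𝕜) (hx : c + f x ≠ 0) :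
    HasLogDerivAt (fun y => c + f y) (u * (f x / (c + f x))) x :=
  (HasDerivAt.const_add c hf).congr_deriv (by field_simp)

theorem rpow_const {f : ℝ → ℝ} {u x : ℝ} (hf : HasLogDerivAt f u x) (a : ℝ) (hx : f x ≠ 0) :
    HasLogDerivAt (fun y => f y ^ a) (a * u) x :=
  (HasDerivAt.rpow_const hf (Or.inl hx)).congr_deriv (by
    rw [Real.rpow_sub_one hx]
    field_simp)

theorem deriv_deriv {V : 𝕜 → 𝕜} {V' : 𝕜} (hf : ∀ᶠ y in 𝓝 x, HasLogDerivAt f (V y) y)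
    (hV : HasDerivAt V V' x) : deriv (deriv f) x = f x * (V' + V x ^ 2) := by
  have hderiv : deriv f =ᶠ[𝓝 x] fun y => f y * V y := hf.mono fun _ hy => hy.deriv
  rw [hderiv.deriv_eq, (HasDerivAt.fun_mul hf.self_of_nhds hV).deriv]
  ring

end HasLogDerivAt

end LogDeriv

/-- The weight `(ε / r) ^ l R ^ (2 / (p - 1))` in the factor `1 + w` of `psiSup`. -/
noncomputable def psiSupWeight (p l R ε r : ℝ) : ℝ :=
  (ε / r) ^ l * R ^ (2 / (p - 1))

/-- The share `w / (1 + w)` of the weight `w` in the factor `1 + w` of `psiSup`. -/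
noncomputable def psiSupShare (p l R ε r : ℝ) : ℝ :=
  psiSupWeight p l R ε r / (1 + psiSupWeight p l R ε r)

/-- The logarithmic derivative `ψ_r / ψ` of `psiSup`, which does not depend on time. -/
noncomputable def psiSupLogDeriv (p l R ε r : ℝ) : ℝ :=
  2 / (p - 1) * (-(r - ε)⁻¹ + (R - r)⁻¹ + (1 + r)⁻¹) - l * (r⁻¹ * psiSupShare p l R ε r)

section Derivatives

variable {p γ l R ε r t : ℝ}

theorem psiSupWeight_pos (hε : 0 < ε) (hr : 0 < r) (hR : 0 < R) : 0 < psiSupWeight p l R ε r := by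
  unfold psiSupWeight
  positivity

theorem psiSupShare_nonneg (hε : 0 < ε) (hr : 0 < r) (hR : 0 < R) :
    0 ≤ psiSupShare p l R ε r := by
  have hw := psiSupWeight_pos (p := p) (l := l) hε hr hR
  unfold psiSupShare
  positivity

theorem psiSupShare_le_one (hε : 0 < ε) (hr : 0 < r) (hR : 0 < R) :
    psiSupShare p l R ε r ≤ 1 := by
  have hw := psiSupWeight_pos (p := p) (l := l) hε hr hR
  exact (div_le_one (by positivity)).2 (by linarith)

theorem psiSup_pos (hε : 0 < ε) (hr : ε < r) (hR : r < R) : 0 < psiSup p γ l R ε r t := by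
  have hr0 : 0 < r := hε.trans hr
  have singular : 0 < ((r - ε) * (R - r)) ^ (-2 / (p - 1)) :=
    Real.rpow_pos_of_pos (mul_pos (sub_pos.2 hr) (sub_pos.2 hR)) _
  have weight : 0 < 1 + psiSupWeight p l R ε r :=
    add_pos one_pos (psiSupWeight_pos hε hr0 (hr0.trans hR))
  exact mul_pos (mul_pos (mul_pos singular (by positivity)) weight) (Real.exp_pos _)

theorem hasLogDerivAt_psiSupWeight (hε : ε ≠ 0) (hr : r ≠ 0) :
    HasLogDerivAt (psiSupWeight p l R ε) (-(l * r⁻¹)) r := by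
  have ratio : HasLogDerivAt (fun s => ε / s) (-r⁻¹) r :=
    ((hasDerivAt_const r ε).fun_div (hasDerivAt_id' r) hr).congr_deriv (by field_simp; ring)
  have h := (ratio.rpow_const l (div_ne_zero hε hr)).mul_const (R ^ (2 / (p - 1)))
  rwa [mul_neg] at h

theorem hasLogDerivAt_one_add_psiSupWeight (hε : 0 < ε) (hr : 0 < r) (hR : 0 < R) :
    HasLogDerivAt (fun s => 1 + psiSupWeight p l R ε s)
      (-(l * r⁻¹) * psiSupShare p l R ε r) r :=
  (hasLogDerivAt_psiSupWeight hε.ne' hr.ne').const_add 1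
    (add_pos one_pos (psiSupWeight_pos hε hr hR)).ne'

theorem hasLogDerivAt_psiSupShare (hε : 0 < ε) (hr : 0 < r) (hR : 0 < R) :
    HasLogDerivAt (psiSupShare p l R ε) (-(l * r⁻¹) * (1 - psiSupShare p l R ε r)) r := by
  have hw : 1 + psiSupWeight p l R ε r ≠ 0 := (add_pos one_pos (psiSupWeight_pos hε hr hR)).ne'
  have weight : HasLogDerivAt (psiSupWeight p l R ε) (-(l * r⁻¹)) r :=
    hasLogDerivAt_psiSupWeight hε.ne' hr.ne'
  have h := weight.div (hasLogDerivAt_one_add_psiSupWeight hε hr hR) hw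
  rwa [← mul_one_sub] at h

theorem hasLogDerivAt_psiSup (hε : 0 < ε) (hr : ε < r) (hR : r < R) :
    HasLogDerivAt (fun s => psiSup p γ l R ε s t) (psiSupLogDeriv p l R ε r) r := by
  have hr0 : 0 < r := hε.trans hr
  have hx : r - ε ≠ 0 := (sub_pos.2 hr).ne'
  have hy : R - r ≠ 0 := (sub_pos.2 hR).ne'
  have hz : 1 + r ≠ 0 := by positivity
  have inner := HasLogDerivAt.of_hasDerivAt ((hasDerivAt_id' r).sub_const ε) hx
  have outer := HasLogDerivAt.of_hasDerivAt ((hasDerivAt_id' r).const_sub R) hy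
  have growth := HasLogDerivAt.of_hasDerivAt ((hasDerivAt_id' r).const_add 1) hz
  have h := ((((inner.mul outer).rpow_const (-2 / (p - 1)) (mul_ne_zero hx hy)).mul
    (growth.rpow_const (2 / (p - 1)) hz)).mul
      (hasLogDerivAt_one_add_psiSupWeight (p := p) (l := l) hε hr0 (hr0.trans hR))).mul_const
        (Real.exp (γ * (t + 1)))
  convert h using 1
  · rfl
  · unfold psiSupLogDeriv
    ring

theorem hasDerivAt_psiSupLogDeriv (hε : 0 < ε) (hr : ε < r) (hR : r < R) :
    HasDerivAt (psiSupLogDeriv p l R ε)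
      (2 / (p - 1) * ((r - ε)⁻¹ ^ 2 + (R - r)⁻¹ ^ 2 - (1 + r)⁻¹ ^ 2)
        + l * r⁻¹ ^ 2 * psiSupShare p l R ε r * (1 + l * (1 - psiSupShare p l R ε r))) r := by
  have hr0 : 0 < r := hε.trans hr
  have inner := ((hasDerivAt_id' r).sub_const ε).fun_inv (sub_pos.2 hr).ne'
  have outer := ((hasDerivAt_id' r).const_sub R).fun_inv (sub_pos.2 hR).ne'
  have growth := ((hasDerivAt_id' r).const_add 1).fun_inv (by positivity)
  have share := (hasDerivAt_inv hr0.ne').fun_mul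
    (hasLogDerivAt_psiSupShare (p := p) (l := l) hε hr0 (hr0.trans hR))
  refine ((((inner.fun_neg.fun_add outer).fun_add growth).const_mul (2 / (p - 1))).fun_sub
    (share.const_mul l)).congr_deriv ?_
  simp only [neg_div, one_div, ← inv_pow]
  ring

theorem deriv_psiSup_time : deriv (psiSup p γ l R ε r) t = γ * psiSup p γ l R ε r t := by
  have h := ((((hasDerivAt_id' t).add_const 1).const_mul γ).exp).const_mul
    (((r - ε) * (R - r)) ^ (-2 / (p - 1)) * (1 + r) ^ (2 / (p - 1))
      * (1 + (ε / r) ^ l * R ^ (2 / (p - 1))))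
  refine (h.congr_deriv ?_).deriv
  unfold psiSup
  ring

theorem psiSup_operator_eq (N : ℝ) (hε : 0 < ε) (hr : ε < r) (hR : r < R) :
    deriv (deriv fun s => psiSup p γ l R ε s t) r
        + N / r * deriv (fun s => psiSup p γ l R ε s t) r
        - psiSup p γ l R ε r t ^ p - deriv (psiSup p γ l R ε r) t
      = psiSup p γ l R ε r t *
        (deriv (psiSupLogDeriv p l R ε) r + psiSupLogDeriv p l R ε r ^ 2
          + N / r * psiSupLogDeriv p l R ε r - (psiSup p γ l R ε r t ^ (p - 1) + γ)) := by
  have hlog : ∀ᶠ s in 𝓝 r,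
      HasLogDerivAt (fun s => psiSup p γ l R ε s t) (psiSupLogDeriv p l R ε s) s := by
    filter_upwards [Ioo_mem_nhds hr hR] with s hs
    exact hasLogDerivAt_psiSup hε hs.1 hs.2
  have hψ : psiSup p γ l R ε r t ≠ 0 := (psiSup_pos hε hr hR).ne'
  have hpow : psiSup p γ l R ε r t ^ p
      = psiSup p γ l R ε r t * psiSup p γ l R ε r t ^ (p - 1) := by
    rw [Real.rpow_sub_one hψ, mul_div_cancel₀ _ hψ]
  rw [HasLogDerivAt.deriv_deriv hlog
      (hasDerivAt_psiSupLogDeriv hε hr hR).differentiableAt.hasDerivAt,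
    hlog.self_of_nhds.deriv, deriv_psiSup_time, hpow]
  ring

end Derivatives

section Absorption

/-- The variables `s, x, y, z` stand for `r⁻¹, (r - ε)⁻¹, (R - r)⁻¹, (1 + r)⁻¹`, and `q` for
`psiSupShare`. -/
theorem log_radial_laplacian_le {α N l q s x y z : ℝ} (hα : 0 ≤ α) (hl : 0 ≤ l)
    (hlN : l + 1 ≤ N) (hq0 : 0 ≤ q) (hq1 : q ≤ 1) (hs : 0 ≤ s) (hx : 0 ≤ x) (hy : 0 ≤ y)
    (hz : 0 ≤ z) :
    α * (x ^ 2 + y ^ 2 - z ^ 2) + l * s ^ 2 * q * (1 + l * (1 - q))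
        + (α * (-x + y + z) - l * (s * q)) ^ 2 + N * s * (α * (-x + y + z) - l * (s * q))
      ≤ α * (1 + α) * x ^ 2 - α * (N - 2 * l) * (s * x) + α * y ^ 2
        + α ^ 2 * (y + z) ^ 2 + α * (N * s * (y + z)) := by
  have : 0 ≤ N - 1 - l := by linarith
  have : 0 ≤ 1 - q := sub_nonneg.2 hq1
  have discarded : 0 ≤ α * z ^ 2 + 2 * α ^ 2 * (x * (y + z)) + 2 * α * l * q * (s * (y + z))
      + l * q * s ^ 2 * (N - 1 - l) + 2 * α * l * (1 - q) * (s * x) := by positivity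
  linarith

theorem log_radial_laplacian_cross_terms_le {α N c s x y z : ℝ} (hα : 0 ≤ α) (hN : 0 ≤ N)
    (hc : 0 < c) (hsx : s ≤ x) (hy : 0 ≤ y) (hz : 0 ≤ z) (hz1 : z ≤ 1) :
    α ^ 2 * (y + z) ^ 2 + α * (N * s * (y + z))
      ≤ α * (c / 2) * x ^ 2 + (2 * α ^ 2 + α * N ^ 2 / c) * (y ^ 2 + 1) := by
  have young : N * s * (y + z) ≤ c / 2 * x ^ 2 + N ^ 2 / (2 * c) * (y + z) ^ 2 :=
    calc N * s * (y + z) ≤ N * x * (y + z) := by gcongr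
      _ = 2 * x * (N * (y + z)) / 2 := by ring
      _ ≤ (c * x ^ 2 + c⁻¹ * (N * (y + z)) ^ 2) / 2 := by
        gcongr
        exact two_mul_le_add_mul_sq hc
      _ = c / 2 * x ^ 2 + N ^ 2 / (2 * c) * (y + z) ^ 2 := by field_simp
  have hyz : (y + z) ^ 2 ≤ 2 * (y ^ 2 + 1) := by
    have hz2 : z ^ 2 ≤ 1 := pow_le_one₀ hz hz1
    linarith [add_sq_le (a := y) (b := z)]
  calc α ^ 2 * (y + z) ^ 2 + α * (N * s * (y + z))
      ≤ α ^ 2 * (y + z) ^ 2 + α * (c / 2 * x ^ 2 + N ^ 2 / (2 * c) * (y + z) ^ 2) := by gcongr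
    _ = α * (c / 2) * x ^ 2 + (α ^ 2 + α * N ^ 2 / (2 * c)) * (y + z) ^ 2 := by ring
    _ ≤ α * (c / 2) * x ^ 2 + (α ^ 2 + α * N ^ 2 / (2 * c)) * (2 * (y ^ 2 + 1)) := by gcongr
    _ = α * (c / 2) * x ^ 2 + (2 * α ^ 2 + α * N ^ 2 / c) * (y ^ 2 + 1) := by field_simp

theorem exists_psiSup_log_radial_laplacian_le {p l N c : ℝ} (hp : 1 < p) (hl : 0 ≤ l)
    (hlN : l + 1 ≤ N) (hc : 0 < c) :
    ∃ B K, ∀ R ε r, 0 < ε → ε < r → r < R →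
      deriv (psiSupLogDeriv p l R ε) r + psiSupLogDeriv p l R ε r ^ 2
          + N / r * psiSupLogDeriv p l R ε r
        ≤ 2 / (p - 1) * (1 + 2 / (p - 1) + c / 2) * (r - ε)⁻¹ ^ 2
          - 2 / (p - 1) * (N - 2 * l) * (r⁻¹ * (r - ε)⁻¹) + B * (R - r)⁻¹ ^ 2 + K := by
  have hα : 0 ≤ 2 / (p - 1) := (div_pos two_pos (sub_pos.2 hp)).le
  obtain ⟨K, hK⟩ : ∃ K, K = 2 * (2 / (p - 1)) ^ 2 + 2 / (p - 1) * N ^ 2 / c := ⟨_, rfl⟩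
  refine ⟨2 / (p - 1) + K, K, fun R ε r hε hr hR => ?_⟩
  have hr0 : 0 < r := hε.trans hr
  have hR0 : 0 < R := hr0.trans hR
  have hx : 0 < r - ε := sub_pos.2 hr
  have hy : 0 ≤ (R - r)⁻¹ := (inv_pos.2 (sub_pos.2 hR)).le
  have hz : 0 ≤ (1 + r)⁻¹ := by positivity
  have expansion := log_radial_laplacian_le (q := psiSupShare p l R ε r) hα hl hlN
    (psiSupShare_nonneg hε hr0 hR0) (psiSupShare_le_one hε hr0 hR0) (inv_pos.2 hr0).le
    (inv_pos.2 hx).le hy hz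
  have cross := log_radial_laplacian_cross_terms_le hα (by linarith : 0 ≤ N) hc
    (inv_anti₀ hx (by linarith : r - ε ≤ r)) hy hz (inv_le_one_of_one_le₀ (by linarith))
  rw [← hK] at cross
  rw [(hasDerivAt_psiSupLogDeriv hε hr hR).deriv, div_eq_mul_inv N, psiSupLogDeriv]
  linarith

variable {p γ l R ε r t : ℝ}

theorem psiSup_rpow_sub_one (hp : p ≠ 1) (hε : 0 < ε) (hr : ε < r) (hR : r < R) :
    psiSup p γ l R ε r t ^ (p - 1)
      = ((r - ε)⁻¹ * (R - r)⁻¹ * (1 + r)) ^ 2 * (1 + psiSupWeight p l R ε r) ^ (p - 1)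
        * Real.exp (γ * (t + 1) * (p - 1)) := by
  have hr0 : 0 < r := hε.trans hr
  have hR0 : 0 < R := hr0.trans hR
  have : 0 < r - ε := sub_pos.2 hr
  have : 0 < R - r := sub_pos.2 hR
  have hp1 : p - 1 ≠ 0 := sub_ne_zero.2 hp
  unfold psiSup psiSupWeight
  rw [Real.mul_rpow (by positivity) (by positivity), Real.mul_rpow (by positivity) (by positivity),
    Real.mul_rpow (by positivity) (by positivity), ← Real.rpow_mul (by positivity),
    ← Real.rpow_mul (by positivity), div_mul_cancel₀ _ hp1, div_mul_cancel₀ _ hp1,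
    ← Real.exp_mul, Real.rpow_neg (by positivity),
    Real.rpow_two, Real.rpow_two, ← inv_pow, mul_inv, mul_pow _ (1 + r)]

theorem inv_outer_sq_mul_exp_le_psiSup_rpow (hp : 1 < p) (hε : 0 < ε) (hr : ε < r) (hR : r < R) :
    (R - r)⁻¹ ^ 2 * Real.exp (γ * (t + 1) * (p - 1)) ≤ psiSup p γ l R ε r t ^ (p - 1) := by
  have hr0 : 0 < r := hε.trans hr
  have hx : 0 < r - ε := sub_pos.2 hr
  have hweight : 1 ≤ (1 + psiSupWeight p l R ε r) ^ (p - 1) :=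
    Real.one_le_rpow (le_add_of_nonneg_right (psiSupWeight_pos hε hr0 (hr0.trans hR)).le)
      (sub_pos.2 hp).le
  have hinner : 1 ≤ (r - ε)⁻¹ * (1 + r) := by
    rw [inv_mul_eq_div, one_le_div hx]
    linarith
  rw [psiSup_rpow_sub_one hp.ne' hε hr hR]
  gcongr
  calc (R - r)⁻¹ ^ 2 = ((R - r)⁻¹ * 1) ^ 2 * 1 := by ring
    _ ≤ ((R - r)⁻¹ * ((r - ε)⁻¹ * (1 + r))) ^ 2 * (1 + psiSupWeight p l R ε r) ^ (p - 1) := by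
      gcongr
    _ = _ := by ring

theorem rpow_mul_sq_le_one_add_psiSupWeight_rpow {δ : ℝ} (hp : 1 < p) (hl : 0 ≤ l) (hr : 0 < r)
    (hR : 0 ≤ R) (hδ : 0 ≤ δ) (hδr : δ * r ≤ ε) :
    (δ ^ l) ^ (p - 1) * R ^ 2 ≤ (1 + psiSupWeight p l R ε r) ^ (p - 1) := by
  have hp1 : 0 < p - 1 := sub_pos.2 hp
  have hweight : δ ^ l * R ^ (2 / (p - 1)) ≤ psiSupWeight p l R ε r := by
    have hδε : δ ≤ ε / r := (le_div_iff₀ hr).2 hδr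
    unfold psiSupWeight
    gcongr
  calc (δ ^ l) ^ (p - 1) * R ^ 2 = (δ ^ l * R ^ (2 / (p - 1))) ^ (p - 1) := by
        rw [Real.mul_rpow (by positivity) (by positivity), ← Real.rpow_mul hR,
          div_mul_cancel₀ _ hp1.ne', Real.rpow_two]
    _ ≤ (1 + psiSupWeight p l R ε r) ^ (p - 1) := by
      gcongr
      linarith

theorem inv_inner_sq_mul_exp_le_psiSup_rpow {δ : ℝ} (hp : 1 < p) (hl : 0 ≤ l) (hε : 0 < ε)
    (hr : ε < r) (hR : r < R) (hδ : 0 ≤ δ) (hδr : δ * r ≤ ε) :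
    (δ ^ l) ^ (p - 1) * (r - ε)⁻¹ ^ 2 * Real.exp (γ * (t + 1) * (p - 1))
      ≤ psiSup p γ l R ε r t ^ (p - 1) := by
  have hr0 : 0 < r := hε.trans hr
  have hR0 : 0 < R := hr0.trans hR
  have hy : 0 < R - r := sub_pos.2 hR
  have houter : 1 ≤ (R - r)⁻¹ * (1 + r) * R := by
    rw [inv_mul_eq_div, div_mul_eq_mul_div, one_le_div hy]
    linarith [mul_pos hr0 hR0]
  rw [psiSup_rpow_sub_one hp.ne' hε hr hR]
  refine mul_le_mul_of_nonneg_right ?_ (Real.exp_pos _).le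
  calc (δ ^ l) ^ (p - 1) * (r - ε)⁻¹ ^ 2
      = 1 ^ 2 * ((δ ^ l) ^ (p - 1) * (r - ε)⁻¹ ^ 2) := by ring
    _ ≤ ((R - r)⁻¹ * (1 + r) * R) ^ 2 * ((δ ^ l) ^ (p - 1) * (r - ε)⁻¹ ^ 2) := by gcongr
    _ = ((r - ε)⁻¹ * (R - r)⁻¹ * (1 + r)) ^ 2 * ((δ ^ l) ^ (p - 1) * R ^ 2) := by ring
    _ ≤ _ := mul_le_mul_of_nonneg_left
      (rpow_mul_sq_le_one_add_psiSupWeight_rpow hp hl hr0 hR0.le hδ hδr) (sq_nonneg _)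

theorem singular_terms_le_psiSup_rpow {B κ m : ℝ} (hp : 1 < p) (hl : 0 ≤ l) (hε : 0 < ε)
    (hr : ε < r) (hR : r < R) (hm : 0 < m) (hκm : κ ≤ m)
    (hB : 2 * B ≤ Real.exp (γ * (t + 1) * (p - 1)))
    (hκ : 2 * κ ≤ ((1 - κ / m) ^ l) ^ (p - 1) * Real.exp (γ * (t + 1) * (p - 1))) :
    κ * (r - ε)⁻¹ ^ 2 - m * (r⁻¹ * (r - ε)⁻¹) + B * (R - r)⁻¹ ^ 2
      ≤ psiSup p γ l R ε r t ^ (p - 1) := by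
  have hr0 : 0 < r := hε.trans hr
  have hx : 0 < r - ε := sub_pos.2 hr
  have outer : 2 * B * (R - r)⁻¹ ^ 2 ≤ psiSup p γ l R ε r t ^ (p - 1) :=
    calc 2 * B * (R - r)⁻¹ ^ 2 ≤ Real.exp (γ * (t + 1) * (p - 1)) * (R - r)⁻¹ ^ 2 := by gcongr
      _ = (R - r)⁻¹ ^ 2 * Real.exp (γ * (t + 1) * (p - 1)) := mul_comm _ _
      _ ≤ _ := inv_outer_sq_mul_exp_le_psiSup_rpow hp hε hr hR
  rcases le_total (κ * r) (m * (r - ε)) with hfar | hnear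
  · have hψ : 0 < psiSup p γ l R ε r t ^ (p - 1) := Real.rpow_pos_of_pos (psiSup_pos hε hr hR) _
    have inner : κ * (r - ε)⁻¹ ^ 2 ≤ m * (r⁻¹ * (r - ε)⁻¹) :=
      calc κ * (r - ε)⁻¹ ^ 2 = κ * r * (r⁻¹ * (r - ε)⁻¹ ^ 2) := by field_simp
        _ ≤ m * (r - ε) * (r⁻¹ * (r - ε)⁻¹ ^ 2) := by gcongr
        _ = m * (r⁻¹ * (r - ε)⁻¹) := by field_simp
    linarith
  · have hδr : (1 - κ / m) * r ≤ ε := by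
      rw [one_sub_div hm.ne', div_mul_eq_mul_div, div_le_iff₀ hm]
      linarith
    have hδ : 0 ≤ 1 - κ / m := sub_nonneg.2 ((div_le_one hm).2 hκm)
    have inner : 2 * κ * (r - ε)⁻¹ ^ 2 ≤ psiSup p γ l R ε r t ^ (p - 1) :=
      calc 2 * κ * (r - ε)⁻¹ ^ 2
          ≤ ((1 - κ / m) ^ l) ^ (p - 1) * Real.exp (γ * (t + 1) * (p - 1)) * (r - ε)⁻¹ ^ 2 := by
            gcongr
        _ = ((1 - κ / m) ^ l) ^ (p - 1) * (r - ε)⁻¹ ^ 2 * Real.exp (γ * (t + 1) * (p - 1)) := by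
            ring
        _ ≤ _ := inv_inner_sq_mul_exp_le_psiSup_rpow hp hl hε hr hR hδ hδr
    have drift : 0 ≤ m * (r⁻¹ * (r - ε)⁻¹) := by positivity
    linarith

theorem eventually_singular_terms_le_psiSup_rpow {p l B κ m : ℝ} (hp : 1 < p) (hl : 0 ≤ l)
    (hm : 0 < m) (hκm : κ < m) :
    ∀ᶠ γ in atTop, ∀ R ε r t, 0 < ε → ε < r → r < R → 0 ≤ t →
      κ * (r - ε)⁻¹ ^ 2 - m * (r⁻¹ * (r - ε)⁻¹) + B * (R - r)⁻¹ ^ 2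
        ≤ psiSup p γ l R ε r t ^ (p - 1) := by
  have hp1 : 0 < p - 1 := sub_pos.2 hp
  have hδ : 0 < ((1 - κ / m) ^ l) ^ (p - 1) :=
    Real.rpow_pos_of_pos (Real.rpow_pos_of_pos (sub_pos.2 ((div_lt_one hm).2 hκm)) _) _
  have hrate : Tendsto (fun γ : ℝ => γ * (p - 1)) atTop atTop := tendsto_id.atTop_mul_const hp1
  filter_upwards [eventually_ge_atTop 0, hrate.eventually_ge_atTop (2 * B),
    (hrate.const_mul_atTop hδ).eventually_ge_atTop (2 * κ)] with γ hγ hγB hγκ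
  intro R ε r t hε hr hR ht
  have hexp : γ * (p - 1) ≤ Real.exp (γ * (t + 1) * (p - 1)) := by
    have hgrow : 0 ≤ γ * t * (p - 1) := by positivity
    linarith [Real.add_one_le_exp (γ * (t + 1) * (p - 1))]
  exact singular_terms_le_psiSup_rpow hp hl hε hr hR hm hκm.le (hγB.trans hexp)
    (hγκ.trans (mul_le_mul_of_nonneg_left hexp hδ.le))

end Absorption

theorem psiSup_is_supersolution_general (n p : ℝ) (hp : 1 < p) (hnp : 2 * p / (p - 1) < n) :
    ∃ γ > (0 : ℝ), ∃ l ∈ Set.Ioc (0 : ℝ) 1,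
      ∀ R, ∀ ε > (0 : ℝ), ∀ r ∈ Set.Ioo ε R, ∀ t : ℝ, 0 ≤ t →
        deriv (deriv fun s => psiSup p γ l R ε s t) r
          + ((n - 1) / r) * deriv (fun s => psiSup p γ l R ε s t) r
          - psiSup p γ l R ε r t ^ p
          - deriv (psiSup p γ l R ε r) t ≤ 0 := by
  have hp1 : 0 < p - 1 := sub_pos.2 hp
  have hα : 0 < 2 / (p - 1) := div_pos two_pos hp1
  have hcrit : 2 * p / (p - 1) = 2 + 2 / (p - 1) := by
    field_simp
    ring
  obtain ⟨c, hc, hnc⟩ : ∃ c > 0, n - 1 = 1 + 2 / (p - 1) + c :=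
    ⟨n - 2 - 2 / (p - 1), by linarith, by ring⟩
  obtain ⟨l, hl, hlc⟩ : ∃ l ∈ Set.Ioc (0 : ℝ) 1, l ≤ c / 8 :=
    ⟨min 1 (c / 8), ⟨by positivity, min_le_left _ _⟩, min_le_right _ _⟩
  have hκm : 2 / (p - 1) * (1 + 2 / (p - 1) + c / 2) < 2 / (p - 1) * (n - 1 - 2 * l) :=
    mul_lt_mul_of_pos_left (by linarith) hα
  obtain ⟨B, K, hlaplacian⟩ :=
    exists_psiSup_log_radial_laplacian_le (N := n - 1) hp hl.1.le (by linarith) hc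
  obtain ⟨γ, hγ, hγK, habsorb⟩ := ((eventually_gt_atTop 0).and ((eventually_ge_atTop K).and
    (eventually_singular_terms_le_psiSup_rpow (B := B) hp hl.1.le
      (mul_pos hα (by linarith)) hκm))).exists
  refine ⟨γ, hγ, l, hl, fun R ε hε r ⟨hr, hR⟩ t ht => ?_⟩
  rw [psiSup_operator_eq (n - 1) hε hr hR]
  refine mul_nonpos_of_nonneg_of_nonpos (psiSup_pos hε hr hR).le ?_
  linarith [hlaplacian R ε r hε hr hR, habsorb R ε r t hε hr hR ht]

/-- for `n > 2p/(p-1)` there are `γ > 0`, `l ∈ (0,1]`, and thresholds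
`R₀ > 1`, `ε₀ ∈ (0,1)` such that `ψ_{R,ε}` is a supersolution for all `R ≥ R₀`,
`ε ∈ (0,ε₀]`. -/
theorem psiSup_is_supersolution
    (n : ℕ) (hn : 3 ≤ n) (p : ℝ) (hp : 1 < p) (hnp : 2 * p / (p - 1) < (n : ℝ)) :
    ∃ γ > (0:ℝ), ∃ l ∈ Set.Ioc (0:ℝ) 1, ∃ R₀ > (1:ℝ), ∃ ε₀ ∈ Set.Ioo (0:ℝ) 1,
      ∀ R ≥ R₀, ∀ ε ∈ Set.Ioc (0:ℝ) ε₀, ∀ r ∈ Set.Ioo ε R, ∀ t : ℝ, 0 < t →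
        deriv (deriv fun s => psiSup p γ l R ε s t) r
          + (((n : ℝ) - 1) / r) * deriv (fun s => psiSup p γ l R ε s t) r
          - psiSup p γ l R ε r t ^ p
          - deriv (psiSup p γ l R ε r) t ≤ 0 := by
  obtain ⟨γ, hγ, l, hl, hψ⟩ := psiSup_is_supersolution_general n p hp hnp
  exact ⟨γ, hγ, l, hl, 2, by norm_num, 1 / 2, by norm_num,
    fun R _ ε hε r hr t ht => hψ R ε hε.1 r hr t ht.le⟩
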